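/- Let A = (F, FK)Π ∈ ℝ^{d×m}, where F ∈ ℝ^{d×r} has rank r, K ∈ ℝ^{r×ℓ} (ℓ = m − r) is nonnegative with columns k_1, …, k_ℓ of unit 1-norm, and Π is an m×m permutation matrix. Let N ∈ ℝ^{d×m}, Ã = A + N, let Ã^r be a best rank-r approximation of Ã in the spectral norm, set N̄ = N − (Ã − Ã^r), write N̄Π⁻¹ = (N̄⁽¹⁾, N̄⁽²⁾), and set F̂ = F + N̄⁽¹⁾ and B̂ = F̂K + (−N̄⁽¹⁾K + N̄⁽²⁾), so that Ã^r Π⁻¹ = (F̂, B̂). Let σ = σ_min(F), μ = max_i ‖k_i‖_2, and ε = σ(1 − μ)/4. Suppose ‖N‖_2 < ε. Then F̂ᵀF̂ is invertible, and for L = F̂(F̂ᵀF̂)⁻²F̂ᵀ every column f̂_j of F̂ satisfies f̂_jᵀ L f̂_j = 1 while every column b̂_i of B̂ satisfies b̂_iᵀ L b̂_i < 1; consequently, the set 𝓘 = {i : (ã^r_i)ᵀ L ã^r_i = 1}, where ã^r_i denotes the i-th column of Ã^r, is exactly the set of r indices at which Π places the columns of F̂, and the submatrix Ã(𝓘) of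 Ã satisfies ‖Ã(𝓘) − F‖_2 ≤ ‖N‖_2 < ε. -/

import Mathlib

open Matrix

noncomputable def euclNorm {n : ℕ} (v : Fin n → ℝ) : ℝ := Real.sqrt (∑ i, v i ^ 2)

noncomputable def oneNorm {n : ℕ} (v : Fin n → ℝ) : ℝ := ∑ i, |v i|

noncomputable def specNorm {d m : ℕ} (M : Matrix (Fin d) (Fin m) ℝ) : ℝ :=
  ‖LinearMap.toContinuousLinearMap (Matrix.toEuclideanLin M)‖

noncomputable def sigmaMin {d r : ℕ} (M : Matrix (Fin d) (Fin r) ℝ) : ℝ :=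
  sInf ((fun x => euclNorm (M *ᵥ x)) '' {x : Fin r → ℝ | euclNorm x = 1})



theorem en_eq {n : ℕ} (v : Fin n → ℝ) : euclNorm v = ‖WithLp.toLp 2 v‖ := by
  simp [euclNorm, EuclideanSpace.norm_eq]

theorem en_nonneg {n : ℕ} (v : Fin n → ℝ) : 0 ≤ euclNorm v := Real.sqrt_nonneg _

theorem en_sq {n : ℕ} (v : Fin n → ℝ) : euclNorm v ^ 2 = v ⬝ᵥ v := by
  rw [euclNorm, Real.sq_sqrt (Finset.sum_nonneg fun i _ => sq_nonneg _)]
  simp [dotProduct, sq]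

theorem en_add {n : ℕ} (v w : Fin n → ℝ) : euclNorm (v + w) ≤ euclNorm v + euclNorm w := by
  simp only [en_eq, WithLp.toLp_add]; exact norm_add_le _ _

theorem en_neg {n : ℕ} (v : Fin n → ℝ) : euclNorm (-v) = euclNorm v := by
  simp [euclNorm]

theorem en_smul {n : ℕ} (c : ℝ) (v : Fin n → ℝ) : euclNorm (c • v) = |c| * euclNorm v := by
  simp only [en_eq, WithLp.toLp_smul, norm_smul, Real.norm_eq_abs]

theorem en_zero {n : ℕ} (v : Fin n → ℝ) (h : euclNorm v = 0) : v = 0 := by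
  rw [en_eq, norm_eq_zero] at h
  simpa using h

theorem en_dot {n : ℕ} (v w : Fin n → ℝ) : v ⬝ᵥ w ≤ euclNorm v * euclNorm w := by
  have := real_inner_le_norm (WithLp.toLp 2 w) (WithLp.toLp 2 v)
  rw [EuclideanSpace.inner_toLp_toLp] at this
  simp only [en_eq]
  simpa [mul_comm] using this

theorem spec_nonneg {d m : ℕ} (M : Matrix (Fin d) (Fin m) ℝ) : 0 ≤ specNorm M := norm_nonneg _

theorem spec_bound {d m : ℕ} (M : Matrix (Fin d) (Fin m) ℝ) (x : Fin m → ℝ) :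
    euclNorm (M *ᵥ x) ≤ specNorm M * euclNorm x := by
  have := (LinearMap.toContinuousLinearMap (Matrix.toEuclideanLin M)).le_opNorm (WithLp.toLp 2 x)
  simpa [en_eq, specNorm] using this

theorem spec_le {d m : ℕ} (M : Matrix (Fin d) (Fin m) ℝ) (C : ℝ) (hC : 0 ≤ C)
    (h : ∀ x, euclNorm (M *ᵥ x) ≤ C * euclNorm x) : specNorm M ≤ C := by
  refine ContinuousLinearMap.opNorm_le_bound _ hC fun x => ?_
  have := h (WithLp.ofLp x)
  simpa [en_eq, Matrix.toLpLin_apply] using this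

theorem spec_sub {d m : ℕ} (M M' : Matrix (Fin d) (Fin m) ℝ) :
    specNorm (M - M') ≤ specNorm M + specNorm M' := by
  simp only [specNorm, map_sub]
  exact norm_sub_le _ _

theorem sigma_nonneg {d r : ℕ} (M : Matrix (Fin d) (Fin r) ℝ) : 0 ≤ sigmaMin M := by
  apply Real.sInf_nonneg
  rintro _ ⟨x, _, rfl⟩
  exact en_nonneg _

theorem sigma_bound {d r : ℕ} (M : Matrix (Fin d) (Fin r) ℝ) (x : Fin r → ℝ) :
    sigmaMin M * euclNorm x ≤ euclNorm (M *ᵥ x) := by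
  rcases (en_nonneg x).eq_or_lt with h | h
  · rw [← h, mul_zero]; exact en_nonneg _
  · have h1 : sigmaMin M ≤ euclNorm (M *ᵥ ((euclNorm x)⁻¹ • x)) := by
      apply csInf_le
      · refine ⟨0, ?_⟩
        rintro _ ⟨x, _, rfl⟩
        exact en_nonneg _
      · refine ⟨_, ?_, rfl⟩
        simp only [Set.mem_ofPred_eq, en_smul, abs_inv, abs_of_pos h]
        exact inv_mul_cancel₀ h.ne'
    rw [Matrix.mulVec_smul, en_smul, abs_inv, abs_of_pos h] at h1
    calc _ ≤ ((euclNorm x)⁻¹ * euclNorm (M *ᵥ x)) * euclNorm x := by gcongr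
      _ = _ := by field_simp

theorem sub_bound {d m r ℓ : ℕ} (π : Fin m ≃ (Fin r ⊕ Fin ℓ)) (M : Matrix (Fin d) (Fin m) ℝ)
    (M1 : Matrix (Fin d) (Fin r) ℝ) (h : ∀ i a, M1 i a = M i (π.symm (Sum.inl a))) :
    specNorm M1 ≤ specNorm M := by
  refine spec_le _ _ (spec_nonneg _) fun x => ?_
  have h1 : M1 *ᵥ x = M *ᵥ (fun j => Sum.elim x 0 (π j)) := by
    ext i
    simp only [mulVec, dotProduct]
    rw [← π.symm.sum_comp]
    simp [h]
  have h2 : euclNorm x = euclNorm (fun j => Sum.elim x (0 : Fin ℓ → ℝ) (π j)) := by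
    simp only [euclNorm]
    congr 1
    rw [← π.symm.sum_comp]
    simp
  rw [h1, h2]
  exact spec_bound _ _

theorem col_bound {d m : ℕ} (M : Matrix (Fin d) (Fin m) ℝ) (j : Fin m) :
    euclNorm (fun i => M i j) ≤ specNorm M := by
  have := spec_bound M (Pi.single j 1)
  have h1 : euclNorm (Pi.single j 1 : Fin m → ℝ) = 1 := by
    have : euclNorm (Pi.single j 1 : Fin m → ℝ) ^ 2 = 1 := by rw [en_sq]; simp
    have h0 := en_nonneg (Pi.single j 1 : Fin m → ℝ)
    nlinarith
  rw [h1, mul_one] at this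
  convert this using 2
  ext i
  simp

theorem quad_eq {d r : ℕ} (H : Matrix (Fin d) (Fin r) ℝ) (b : Fin d → ℝ) :
    b ⬝ᵥ ((H * ((Hᵀ * H)⁻¹ * (Hᵀ * H)⁻¹) * Hᵀ) *ᵥ b)
      = ((Hᵀ * H)⁻¹ *ᵥ (Hᵀ *ᵥ b)) ⬝ᵥ ((Hᵀ * H)⁻¹ *ᵥ (Hᵀ *ᵥ b)) := by
  have hs : ((Hᵀ * H)⁻¹)ᵀ = (Hᵀ * H)⁻¹ := by
    rw [Matrix.transpose_nonsing_inv]; simp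
  simp only [← Matrix.mulVec_mulVec]
  rw [Matrix.dotProduct_mulVec, ← Matrix.mulVec_transpose, Matrix.dotProduct_mulVec,
    ← Matrix.mulVec_transpose, hs]

theorem gram_inv_apply {d r : ℕ} (H : Matrix (Fin d) (Fin r) ℝ) (hu : IsUnit (Hᵀ * H))
    (k : Fin r → ℝ) : (Hᵀ * H)⁻¹ *ᵥ (Hᵀ *ᵥ (H *ᵥ k)) = k := by
  rw [Matrix.mulVec_mulVec, Matrix.mulVec_mulVec, Matrix.mul_assoc,
    Matrix.nonsing_inv_mul _ ((Matrix.isUnit_iff_isUnit_det _).1 hu), Matrix.one_mulVec]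

theorem pinv_bound {d r : ℕ} (H : Matrix (Fin d) (Fin r) ℝ) (hu : IsUnit (Hᵀ * H)) (s : ℝ)
    (hs : ∀ x, s * euclNorm x ≤ euclNorm (H *ᵥ x)) (c : Fin d → ℝ) :
    s * euclNorm ((Hᵀ * H)⁻¹ *ᵥ (Hᵀ *ᵥ c)) ≤ euclNorm c := by
  set y := (Hᵀ * H)⁻¹ *ᵥ (Hᵀ *ᵥ c) with hy
  refine (hs y).trans ?_
  have h1 : Hᵀ *ᵥ (H *ᵥ y) = Hᵀ *ᵥ c := by
    rw [hy, Matrix.mulVec_mulVec, Matrix.mulVec_mulVec,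
      Matrix.mul_nonsing_inv _ ((Matrix.isUnit_iff_isUnit_det _).1 hu), Matrix.one_mulVec]
  have h2 : euclNorm (H *ᵥ y) ^ 2 = (H *ᵥ y) ⬝ᵥ c := by
    rw [en_sq, Matrix.dotProduct_mulVec, ← Matrix.mulVec_transpose, h1, dotProduct_comm,
      Matrix.dotProduct_mulVec, Matrix.vecMul_transpose]
  have h3 := en_dot (H *ᵥ y) c
  have h4 := en_nonneg (H *ᵥ y)
  have h5 := en_nonneg c
  by_contra hc
  push Not at hc
  nlinarith

theorem gram_unit {d r : ℕ} (H : Matrix (Fin d) (Fin r) ℝ) (s : ℝ) (h0 : 0 < s)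
    (hs : ∀ x, s * euclNorm x ≤ euclNorm (H *ᵥ x)) : IsUnit (Hᵀ * H) := by
  rw [← Matrix.mulVec_injective_iff_isUnit]
  rw [← Matrix.coe_mulVecLin, injective_iff_map_eq_zero]
  intro x hx
  rw [Matrix.mulVecLin_apply, ← Matrix.mulVec_mulVec] at hx
  have h2 : euclNorm (H *ᵥ x) ^ 2 = 0 := by
    rw [en_sq, Matrix.dotProduct_mulVec, ← Matrix.mulVec_transpose, hx, zero_dotProduct]
  have h3 : euclNorm (H *ᵥ x) = 0 := by simpa using h2
  have h4 := hs x
  apply en_zero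
  have := en_nonneg x
  rw [h3] at h4
  nlinarith

/-- Theorem 2 of the paper (robustness) — if `‖N‖₂ < ε = σ(1 − μ)/4`,
then with `L = F̂(F̂ᵀF̂)⁻²F̂ᵀ`, the columns of `Ã^r` lying on the ellipsoid `xᵀLx = 1`
are exactly those at the indices where `Π` places the columns of `F̂`, and the
corresponding submatrix `Ã(𝓘)` of `Ã = A + N` satisfies `‖Ã(𝓘) − F‖₂ ≤ ‖N‖₂ < ε`.
The column arrangement is encoded by a bijection `π : Fin m ≃ Fin r ⊕ Fin ℓ`. -/
theorem stmt10 (d m r ℓ : ℕ)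
    (F : Matrix (Fin d) (Fin r) ℝ) (hF : F.rank = r)
    (K : Matrix (Fin r) (Fin ℓ) ℝ) (hKpos : ∀ a i, 0 ≤ K a i)
    (hK1 : ∀ i : Fin ℓ, oneNorm (fun a => K a i) = 1)
    (π : Fin m ≃ (Fin r ⊕ Fin ℓ))
    (A : Matrix (Fin d) (Fin m) ℝ)
    (hA : ∀ i j, A i j = Sum.elim (fun a => F i a) (fun b => (F * K) i b) (π j))
    (N : Matrix (Fin d) (Fin m) ℝ)
    (Ar : Matrix (Fin d) (Fin m) ℝ) (hAr_rank : Ar.rank ≤ r)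
    (hAr_best : ∀ B : Matrix (Fin d) (Fin m) ℝ, B.rank ≤ r →
      specNorm (A + N - Ar) ≤ specNorm (A + N - B))
    (Nbar : Matrix (Fin d) (Fin m) ℝ) (hNbar : Nbar = N - (A + N - Ar))
    (N1 : Matrix (Fin d) (Fin r) ℝ) (hN1 : ∀ i a, N1 i a = Nbar i (π.symm (Sum.inl a)))
    (N2 : Matrix (Fin d) (Fin ℓ) ℝ) (hN2 : ∀ i b, N2 i b = Nbar i (π.symm (Sum.inr b)))
    (Fhat : Matrix (Fin d) (Fin r) ℝ) (hFhat : Fhat = F + N1)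
    (Bhat : Matrix (Fin d) (Fin ℓ) ℝ) (hBhat : Bhat = Fhat * K + (-(N1 * K) + N2))
    (σ μ ε : ℝ) (hσ : σ = sigmaMin F) (hμ : μ = ⨆ i : Fin ℓ, euclNorm (fun a => K a i))
    (hε : ε = σ * (1 - μ) / 4)
    (hN : specNorm N < ε)
    (L : Matrix (Fin d) (Fin d) ℝ)
    (hL : L = Fhat * ((Fhatᵀ * Fhat)⁻¹ * (Fhatᵀ * Fhat)⁻¹) * Fhatᵀ) :
    IsUnit (Fhatᵀ * Fhat) ∧
    (∀ a : Fin r, (fun i => Ar i (π.symm (Sum.inl a))) = fun i => Fhat i a) ∧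
    (∀ b : Fin ℓ, (fun i => Ar i (π.symm (Sum.inr b))) = fun i => Bhat i b) ∧
    (∀ a : Fin r, (fun i => Fhat i a) ⬝ᵥ (L *ᵥ fun i => Fhat i a) = 1) ∧
    (∀ b : Fin ℓ, (fun i => Bhat i b) ⬝ᵥ (L *ᵥ fun i => Bhat i b) < 1) ∧
    ({i : Fin m | (fun c => Ar c i) ⬝ᵥ (L *ᵥ fun c => Ar c i) = 1} =
      {i : Fin m | ∃ a : Fin r, π i = Sum.inl a}) ∧
    specNorm (Matrix.of (fun i a => (A + N) i (π.symm (Sum.inl a))) - F) ≤ specNorm N ∧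
    specNorm N < ε := by
  have hδ0 := spec_nonneg N
  have hσ0 : 0 ≤ σ := hσ ▸ sigma_nonneg F
  have hε0 : 0 < σ * (1 - μ) := by linarith
  have hσp : 0 < σ := by
    rcases hσ0.eq_or_lt with h | h
    · rw [← h] at hε0; simp at hε0
    · exact h
  have hμ1 : μ < 1 := by
    by_contra hc
    push Not at hc
    nlinarith
  have hμ0 : 0 ≤ μ := by
    rw [hμ]; exact Real.iSup_nonneg fun i => en_nonneg _
  have hμb : ∀ b, euclNorm (fun a => K a b) ≤ μ := fun b => by
    rw [hμ]
    exact le_ciSup (f := fun i => euclNorm (fun a => K a i)) (Set.finite_range _).bddAbove b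
  have hArank : A.rank ≤ r := by
    have : A = F * Matrix.of (fun a j => Sum.elim (fun a' => (1 : Matrix (Fin r) (Fin r) ℝ) a a')
        (fun b => K a b) (π j)) := by
      ext i j
      rw [hA, Matrix.mul_apply]
      simp only [Matrix.of_apply]
      rcases π j with a | b
      · simp [Matrix.one_apply]
      · simp [Matrix.mul_apply]
    rw [this]
    exact (Matrix.rank_mul_le_left _ _).trans hF.le
  have hNb : specNorm Nbar ≤ 2 * specNorm N := by
    have h1 := hAr_best A hArank
    rw [add_sub_cancel_left] at h1
    have h2 := spec_sub N (A + N - Ar)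
    rw [hNbar]; linarith
  have hArA : ∀ i j, Ar i j = A i j + Nbar i j := by
    intro i j; rw [hNbar]; simp only [Matrix.sub_apply, Matrix.add_apply]; ring
  have hN1b : specNorm N1 ≤ 2 * specNorm N := (sub_bound π Nbar N1 hN1).trans hNb
  set δ := specNorm N with hδ
  have hδσ : 2 * δ < σ := by nlinarith
  have hlow : ∀ x, (σ - 2 * δ) * euclNorm x ≤ euclNorm (Fhat *ᵥ x) := by
    intro x
    have h1 := sigma_bound F x
    have h2 := spec_bound N1 x
    have h3 : F *ᵥ x = Fhat *ᵥ x + -(N1 *ᵥ x) := by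
      rw [hFhat, Matrix.add_mulVec]; simp
    have h4 := en_add (Fhat *ᵥ x) (-(N1 *ᵥ x))
    rw [← h3, en_neg] at h4
    have h5 := mul_le_mul_of_nonneg_right hN1b (en_nonneg x)
    rw [← hσ] at h1
    linarith
  have hu := gram_unit Fhat _ (sub_pos.2 hδσ) hlow
  have hc1 : ∀ a : Fin r, (fun i => Ar i (π.symm (Sum.inl a))) = fun i => Fhat i a := by
    intro a; ext i
    rw [hArA, hA, hFhat, Matrix.add_apply, hN1]; simp
  have hc2 : ∀ b : Fin ℓ, (fun i => Ar i (π.symm (Sum.inr b))) = fun i => Bhat i b := by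
    intro b; ext i
    rw [hArA, hA, hBhat, hFhat, Matrix.add_mul]
    simp [hN2]
  have hq1 : ∀ a : Fin r, (fun i => Fhat i a) ⬝ᵥ (L *ᵥ fun i => Fhat i a) = 1 := by
    intro a
    have h1 : (fun i => Fhat i a) = Fhat *ᵥ (Pi.single a 1) := by ext i; simp
    rw [hL, quad_eq, h1, gram_inv_apply _ hu]
    simp
  have hq2 : ∀ b : Fin ℓ, (fun i => Bhat i b) ⬝ᵥ (L *ᵥ fun i => Bhat i b) < 1 := by
    intro b
    set k : Fin r → ℝ := fun a => K a b with hk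
    set c : Fin d → ℝ := -(N1 *ᵥ k) + (fun i => N2 i b) with hcdef
    have h1 : (fun i => Bhat i b) = Fhat *ᵥ k + c := by
      rw [hBhat]; ext i
      simp [hcdef, hk, Matrix.mul_apply, mulVec, dotProduct]
    have hcn : euclNorm c ≤ 2 * δ * (1 + euclNorm k) := by
      have h2 := en_add (-(N1 *ᵥ k)) (fun i => N2 i b)
      rw [en_neg] at h2
      have h3 := spec_bound N1 k
      have h4 := col_bound Nbar (π.symm (Sum.inr b))
      have h5 : (fun i => Nbar i (π.symm (Sum.inr b))) = fun i => N2 i b := by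
        ext i; rw [hN2]
      rw [h5] at h4
      have h6 := mul_le_mul_of_nonneg_right hN1b (en_nonneg k)
      linarith
    rw [hL, quad_eq, h1, Matrix.mulVec_add, Matrix.mulVec_add, gram_inv_apply _ hu, ← en_sq]
    have h2 := pinv_bound Fhat hu _ hlow c
    set y := (Fhatᵀ * Fhat)⁻¹ *ᵥ (Fhatᵀ *ᵥ c) with hy
    have h3 := en_add k y
    have h4 := hμb b
    have h5 := en_nonneg (k + y)
    have h6 := en_nonneg k
    have h7 : euclNorm k + euclNorm y < 1 := by
      have h8 : (σ - 2 * δ) * (euclNorm k + euclNorm y) < (σ - 2 * δ) * 1 := by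
        have h9 : σ * euclNorm k ≤ σ * μ := by gcongr
        nlinarith
      exact lt_of_mul_lt_mul_left h8 (by linarith)
    have h8 : euclNorm (k + y) < 1 := by linarith
    nlinarith
  refine ⟨hu, hc1, hc2, hq1, hq2, ?_, ?_, hN⟩
  · ext j
    simp only [Set.mem_setOf_eq]
    obtain ⟨p, rfl⟩ := π.symm.surjective j
    rcases p with a | b
    · simp [hc1 a, hq1 a]
    · simp [hc2 b, (hq2 b).ne]
  · apply sub_bound π N
    intro i a
    simp [hA]
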